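/- Let (R, 𝔪) be a commutative noetherian local ring and M, N finitely generated R-modules, and let t ≥ 0 be an integer such that 𝔪 is a direct summand of Ω_R^t M ⊕ Ω_R^{t+1} M. If Tor_ℓ^R(M, N) = 0 = Tor_{ℓ+1}^R(M, N) for some ℓ ≥ t + 1, then N has finite projective dimension over R. -/

import Mathlib

/-!
Let `F` be a minimal free resolution of `N`. Since `Tor` is derived in its second variable,
`Tor_{n+1}(X, N) = 0` says that `X ⊗ F` is exact in degree `n + 1` (`TensorExact`,
`tensorExact_of_tor`). For a short exact sequence `0 → K → P → X → 0` with `P` flat, a diagram chase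
shows that `Tor_{n+2}(X, N)` vanishes if and only if `Tor_{n+1}(K, N)` does (`tensorExact_ker`,
`tensorExact_of_ker`).

Write `ℓ = t + 1 + s`. Shifting along the minimal resolution of `M`, the vanishing of
`Tor_ℓ(M, N)` and `Tor_{ℓ+1}(M, N)` gives `Tor_{s+1}(Ω^t M, N) = 0 = Tor_{s+1}(Ω^{t+1} M, N)`. Hence
`Tor_{s+1}(𝔪, N) = 0`, as `𝔪` is a summand of the sum of these syzygies, and therefore
`Tor_{s+2}(R/𝔪, N) = 0`. By minimality this module is `(R/𝔪)^{rank F_{s+2}}`, so `F_{s+2} = 0`, and by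
Nakayama's lemma `F` vanishes from there on.
-/

universe u

open IsLocalRing CategoryTheory

/-- A minimal free resolution of the module `M` over the local ring `R`:
`⋯ → R^{rank 2} → R^{rank 1} → R^{rank 0} → M → 0` is exact, and each differential maps into
`𝔪` times the next free module (minimality). -/
structure MinimalFreeResolution (R : Type u) [CommRing R] [IsLocalRing R]
    (M : Type u) [AddCommGroup M] [Module R M] where
  rank : ℕ → ℕ
  aug : (Fin (rank 0) → R) →ₗ[R] M
  d : (i : ℕ) → ((Fin (rank (i + 1)) → R) →ₗ[R] (Fin (rank i) → R))
  aug_surjective : Function.Surjective aug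
  exact_aug : LinearMap.ker aug = LinearMap.range (d 0)
  exact : ∀ i, LinearMap.ker (d i) = LinearMap.range (d (i + 1))
  minimal : ∀ i, LinearMap.range (d i) ≤
    (maximalIdeal R) • (⊤ : Submodule R (Fin (rank i) → R))

/-- `S` is an `i`-th syzygy `Ω^i M` of `M`, i.e. the `i`-th kernel computed from a minimal free
resolution of `M` over the local ring `R` (`Ω⁰M = M`, `Ω¹M = ker aug`, `Ω^{j+2}M = ker (d j)`). -/
def IsNthSyzygy (R : Type u) [CommRing R] [IsLocalRing R] (i : ℕ)
    (M : Type u) [AddCommGroup M] [Module R M]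
    (S : Type u) [AddCommGroup S] [Module R S] : Prop :=
  ∃ F : MinimalFreeResolution R M,
    match i with
    | 0 => Nonempty (S ≃ₗ[R] M)
    | 1 => Nonempty (S ≃ₗ[R] LinearMap.ker F.aug)
    | (j + 2) => Nonempty (S ≃ₗ[R] LinearMap.ker (F.d j))

/-- `pd_R M ≤ n`: a minimal free resolution of `M` vanishes in homological degrees `> n`. -/
def ProjDimLE (R : Type u) [CommRing R] [IsLocalRing R]
    (M : Type u) [AddCommGroup M] [Module R M] (n : ℕ) : Prop :=
  ∃ F : MinimalFreeResolution R M, ∀ i, n < i → F.rank i = 0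

/-- `A` is a direct summand of the `R`-module `X`. -/
def IsDirectSummand (R : Type u) [CommRing R] (A X : Type u)
    [AddCommGroup A] [Module R A] [AddCommGroup X] [Module R X] : Prop :=
  ∃ (ι : A →ₗ[R] X) (π : X →ₗ[R] A), π.comp ι = LinearMap.id

/-! ### Tor computed from a minimal free resolution -/

noncomputable section

namespace MinimalFreeResolution
variable {R : Type u} [CommRing R] [IsLocalRing R] {N : Type u} [AddCommGroup N] [Module R N]
  (F : MinimalFreeResolution R N)

/-- The deleted resolution `⋯ → R^{rank 1} → R^{rank 0}` as a chain complex of modules. -/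
def complex : ChainComplex (ModuleCat.{u} R) ℕ :=
  ChainComplex.of (fun i => ModuleCat.of R (Fin (F.rank i) → R))
    (fun i => ModuleCat.ofHom (F.d i)) (fun i => by
      rw [← ModuleCat.ofHom_comp, ← ModuleCat.ofHom_zero]
      congr 1
      exact LinearMap.range_le_ker_iff.1 (F.exact i).ge)

lemma complex_d (i : ℕ) : F.complex.d (i + 1) i = ModuleCat.ofHom (F.d i) :=
  ChainComplex.of_d (fun i => ModuleCat.of R (Fin (F.rank i) → R))
    (fun i => ModuleCat.ofHom (F.d i)) i

lemma complex_exactAt_succ (n : ℕ) : F.complex.ExactAt (n + 1) := by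
  rw [HomologicalComplex.exactAt_iff' _ (n + 2) (n + 1) n (by simp) (by simp),
    ShortComplex.moduleCat_exact_iff_range_eq_ker]
  change LinearMap.range (F.complex.d (n + 1 + 1) (n + 1)).hom
    = LinearMap.ker (F.complex.d (n + 1) n).hom
  rw [complex_d, complex_d]
  exact (F.exact n).symm

lemma complex_d_comp_aug :
    F.complex.d 1 0 ≫ (ModuleCat.ofHom F.aug : F.complex.X 0 ⟶ ModuleCat.of R N) = 0 := by
  rw [show F.complex.d 1 0 = ModuleCat.ofHom (F.d 0) from F.complex_d 0]
  exact ModuleCat.hom_ext (LinearMap.range_le_ker_iff.1 F.exact_aug.ge)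

/-- The augmentation, as a chain map to `N` placed in degree `0`. -/
def augHom : F.complex ⟶ (ChainComplex.single₀ (ModuleCat.{u} R)).obj (ModuleCat.of R N) :=
  (ChainComplex.toSingle₀Equiv _ _).symm ⟨ModuleCat.ofHom F.aug, F.complex_d_comp_aug⟩

lemma augHom_f_zero : F.augHom.f 0 = ModuleCat.ofHom F.aug :=
  ChainComplex.toSingle₀Equiv_symm_apply_f_zero _ _

lemma augHom_quasiIso : QuasiIso F.augHom where
  quasiIsoAt n := by
    cases n with
    | zero =>
      rw [ChainComplex.quasiIsoAt₀_iff, ShortComplex.quasiIso_iff_of_zeros' _ rfl rfl rfl]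
      constructor
      · rw [ShortComplex.moduleCat_exact_iff_range_eq_ker]
        change LinearMap.range (F.complex.d 1 0).hom = LinearMap.ker (F.augHom.f 0).hom
        rw [augHom_f_zero, show F.complex.d 1 0 = ModuleCat.ofHom (F.d 0) from F.complex_d 0]
        exact F.exact_aug.symm
      · change Epi (F.augHom.f 0)
        rw [augHom_f_zero]
        exact (ModuleCat.epi_iff_surjective (ModuleCat.ofHom F.aug)).2 F.aug_surjective
    | succ n =>
      rw [quasiIsoAt_iff_exactAt' (hL := ChainComplex.exactAt_succ_single_obj ..)]
      exact F.complex_exactAt_succ n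

/-- A minimal free resolution is a projective resolution in `ModuleCat R`. -/
def toProjectiveResolution : ProjectiveResolution (ModuleCat.of R N) where
  complex := F.complex
  projective n := inferInstanceAs (Projective (ModuleCat.of R (Fin (F.rank n) → R)))
  π := F.augHom
  quasiIso := F.augHom_quasiIso

/-- Exactness of `X ⊗ F` at degree `n + 1`, i.e. the vanishing of `Tor_{n+1}(X, N)` computed from
the resolution `F` of `N`. Note the shift by one: `Tor_0` is not covered. -/
def TensorExact (X : Type u) [AddCommGroup X] [Module R X] (n : ℕ) : Prop :=
  Function.Exact ((F.d (n + 1)).lTensor X) ((F.d n).lTensor X)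

/-- Mathlib's `Tor` is derived in the second variable, so it may be computed from `F`. -/
lemma tensorExact_of_tor (X : Type u) [AddCommGroup X] [Module R X] (n : ℕ)
    (h : Subsingleton
      (((Tor (ModuleCat.{u} R) (n + 1)).obj (ModuleCat.of R X)).obj (ModuleCat.of R N))) :
    F.TensorExact X n := by
  have e := F.toProjectiveResolution.isoLeftDerivedObj
    ((MonoidalCategory.tensoringLeft (ModuleCat.{u} R)).obj (ModuleCat.of R X)) (n + 1)
  have hz := (@ModuleCat.isZero_of_subsingleton _ _ _ h).of_iso e.symm
  have hE := (HomologicalComplex.exactAt_iff_isZero_homology _ _).2 hz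
  rw [HomologicalComplex.exactAt_iff' _ (n + 2) (n + 1) n (by simp) (by simp),
    ShortComplex.ShortExact.moduleCat_exact_iff_function_exact] at hE
  have h1 := F.complex_d (n + 1)
  have h2 := F.complex_d n
  change Function.Exact (((F.complex.d (n + 1 + 1) (n + 1)).hom).lTensor X)
    (((F.complex.d (n + 1) n).hom).lTensor X) at hE
  rw [h1, h2] at hE
  exact hE

end MinimalFreeResolution
end

/-! ### Direct sums, summands and dimension shifting in the first variable -/

namespace MinimalFreeResolution
open TensorProduct

section Shift
variable {R : Type u} [CommRing R] [IsLocalRing R] {N : Type u} [AddCommGroup N] [Module R N]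
  (F : MinimalFreeResolution R N)

lemma comm_apply {A B : Type u} [AddCommGroup A] [Module R A] [AddCommGroup B] [Module R B]
    (g : A →ₗ[R] B) (i : ℕ) (x : A ⊗[R] (Fin (F.rank (i + 1)) → R)) :
    g.rTensor _ ((F.d i).lTensor A x) = (F.d i).lTensor B (g.rTensor _ x) := by
  rw [← LinearMap.comp_apply, LinearMap.rTensor_comp_lTensor,
    ← LinearMap.lTensor_comp_rTensor, LinearMap.comp_apply]

/-- `Tor(A, N)` is a retract of `Tor(X, N)` when `A` is a direct summand of `X`. -/
lemma tensorExact_of_retract {A X : Type u} [AddCommGroup A] [Module R A] [AddCommGroup X]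
    [Module R X] (h : IsDirectSummand R A X) {n : ℕ} (hX : F.TensorExact X n) :
    F.TensorExact A n := by
  obtain ⟨ι, π, hπ⟩ := h
  have hι (i : ℕ) (a : A ⊗[R] (Fin (F.rank i) → R)) :
      π.rTensor _ (ι.rTensor _ a) = a := by
    rw [← LinearMap.rTensor_comp_apply, hπ, LinearMap.rTensor_id_apply]
  intro a
  constructor
  · intro ha
    have h1 : (F.d n).lTensor X (ι.rTensor _ a) = 0 := by
      rw [← comm_apply, ha, map_zero]
    obtain ⟨c, hc⟩ := (hX _).1 h1
    exact ⟨π.rTensor _ c, by rw [← comm_apply, hc, hι]⟩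
  · rintro ⟨c, rfl⟩
    rw [← hι _ ((F.d n).lTensor A _), F.comm_apply ι, F.comm_apply ι,
      hX.apply_apply_eq_zero, map_zero]

lemma tensorExact_prod {A B : Type u} [AddCommGroup A] [Module R A] [AddCommGroup B]
    [Module R B] {n : ℕ} (hA : F.TensorExact A n) (hB : F.TensorExact B n) :
    F.TensorExact (A × B) n := by
  let e (i : ℕ) := TensorProduct.prodLeft R R A B (Fin (F.rank i) → R)
  have he (i : ℕ) (x) : e i ((F.d i).lTensor (A × B) x) =
      ((F.d i).lTensor A (e (i + 1) x).1, (F.d i).lTensor B (e (i + 1) x).2) := by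
    induction x with
    | zero => simp only [map_zero, Prod.fst_zero, Prod.snd_zero, Prod.mk_zero_zero]
    | tmul x y =>
      obtain ⟨a, b⟩ := x
      simp only [e, LinearMap.lTensor_tmul, TensorProduct.prodLeft_tmul]
    | add x y hx hy => simp [hx, hy]
  intro x
  constructor
  · intro hx
    have := he n x
    rw [hx, map_zero, eq_comm, Prod.mk_eq_zero] at this
    obtain ⟨a, ha⟩ := (hA _).1 this.1
    obtain ⟨b, hb⟩ := (hB _).1 this.2
    refine ⟨(e _).symm (a, b), (e _).injective ?_⟩
    rw [he, LinearEquiv.apply_symm_apply, ha, hb]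
  · rintro ⟨y, rfl⟩
    apply (e _).injective
    rw [he, he, hA.apply_apply_eq_zero, hB.apply_apply_eq_zero, map_zero]
    rfl

lemma exact_d (n : ℕ) : Function.Exact (F.d (n + 1)) (F.d n) :=
  LinearMap.exact_iff.2 (F.exact n)

section
variable {P X : Type u} [AddCommGroup P] [Module R P] [Module.Flat R P] [AddCommGroup X]
  [Module R X] (f : P →ₗ[R] X) {n : ℕ}

/-- Dimension shift: `Tor_{n+2}(X, N) = 0` implies `Tor_{n+1}(ker f, N) = 0` for a surjection
`f : P → X` with `P` flat. This is the connecting map argument for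
`0 → ker f ⊗ F → P ⊗ F → X ⊗ F → 0`, whose middle term is exact in positive degrees. -/
lemma tensorExact_ker (hf : Function.Surjective f) (hX : F.TensorExact X (n + 1)) :
    F.TensorExact (LinearMap.ker f) n := by
  have hker (i : ℕ) : Function.Exact ((LinearMap.ker f).subtype.rTensor (Fin (F.rank i) → R))
      (f.rTensor (Fin (F.rank i) → R)) := rTensor_exact _ (LinearMap.exact_subtype_ker_map f) hf
  have hinj (i : ℕ) : Function.Injective
      ((LinearMap.ker f).subtype.rTensor (Fin (F.rank i) → R)) :=
    Module.Flat.rTensor_preserves_injective_linearMap _ (Submodule.injective_subtype _)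
  have hP (i : ℕ) : F.TensorExact P i := Module.Flat.lTensor_exact P (F.exact_d i)
  intro a
  constructor
  · intro ha
    have h1 := F.comm_apply (LinearMap.ker f).subtype n a
    rw [ha, map_zero] at h1
    obtain ⟨c, hc⟩ := (hP n _).1 h1.symm
    have h2 : (F.d (n + 1)).lTensor X (f.rTensor _ c) = 0 := by
      rw [← comm_apply, hc, (hker _).apply_apply_eq_zero]
    obtain ⟨e, he⟩ := (hX _).1 h2
    obtain ⟨e, rfl⟩ := LinearMap.rTensor_surjective _ hf e
    have h3 : f.rTensor _ (c - (F.d (n + 2)).lTensor P e) = 0 := by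
      rw [map_sub, comm_apply, he, sub_self]
    obtain ⟨g, hg⟩ := (hker _ _).1 h3
    refine ⟨g, hinj _ ?_⟩
    rw [comm_apply, hg, map_sub, hc, (hP (n + 1)).apply_apply_eq_zero, sub_zero]
  · rintro ⟨c, rfl⟩
    apply hinj
    rw [comm_apply, comm_apply, (hP n).apply_apply_eq_zero, map_zero]

/-- The converse dimension shift: `Tor_{n+1}(ker f, N) = 0` implies `Tor_{n+2}(X, N) = 0`. -/
lemma tensorExact_of_ker (hf : Function.Surjective f)
    (hK : F.TensorExact (LinearMap.ker f) n) :
    F.TensorExact X (n + 1) := by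
  have hker (i : ℕ) : Function.Exact ((LinearMap.ker f).subtype.rTensor (Fin (F.rank i) → R))
      (f.rTensor (Fin (F.rank i) → R)) := rTensor_exact _ (LinearMap.exact_subtype_ker_map f) hf
  have hinj (i : ℕ) : Function.Injective
      ((LinearMap.ker f).subtype.rTensor (Fin (F.rank i) → R)) :=
    Module.Flat.rTensor_preserves_injective_linearMap _ (Submodule.injective_subtype _)
  have hP (i : ℕ) : F.TensorExact P i := Module.Flat.lTensor_exact P (F.exact_d i)
  intro x
  obtain ⟨y, rfl⟩ := LinearMap.rTensor_surjective _ hf x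
  constructor
  · intro hx
    rw [← comm_apply] at hx
    obtain ⟨a, ha⟩ := (hker _ _).1 hx
    have h1 : (F.d n).lTensor _ a = 0 := by
      apply hinj
      rw [comm_apply, ha, (hP n).apply_apply_eq_zero, map_zero]
    obtain ⟨g, rfl⟩ := (hK _).1 h1
    have h2 : (F.d (n + 1)).lTensor P (y - (LinearMap.ker f).subtype.rTensor _ g) = 0 := by
      rw [map_sub, ← comm_apply, ha, sub_self]
    obtain ⟨z, hz⟩ := (hP _ _).1 h2
    refine ⟨f.rTensor _ z, ?_⟩
    rw [← comm_apply, hz, map_sub, (hker _).apply_apply_eq_zero, sub_zero]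
  · rintro ⟨c, hc⟩
    obtain ⟨c, rfl⟩ := LinearMap.rTensor_surjective _ hf c
    rw [← hc, ← comm_apply, ← comm_apply, (hP _).apply_apply_eq_zero, map_zero]
end

end Shift

/-! ### Syzygies, the residue field and vanishing of ranks -/

section Syzygy
variable {R : Type u} [CommRing R] [IsLocalRing R] {M N : Type u} [AddCommGroup M] [Module R M]
  [AddCommGroup N] [Module R N]
  (F : MinimalFreeResolution R N)

/-- Iterated dimension shift: `Tor_{n+1}(Ω^{j+2} M, N)` vanishes along with `Tor_{n+j+3}(M, N)`. -/
lemma tensorExact_ker_d (G : MinimalFreeResolution R M) (j n : ℕ) (h : F.TensorExact M (n + j + 2)) :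
    F.TensorExact (LinearMap.ker (G.d j)) n := by
  induction j generalizing n with
  | zero =>
    have h0 : F.TensorExact (LinearMap.ker G.aug) (n + 1) :=
      F.tensorExact_ker G.aug G.aug_surjective h
    rw [G.exact_aug] at h0
    have := F.tensorExact_ker (G.d 0).rangeRestrict (G.d 0).surjective_rangeRestrict h0
    rwa [LinearMap.ker_rangeRestrict] at this
  | succ j ih =>
    have h0 : F.TensorExact (LinearMap.ker (G.d j)) (n + 1) :=
      ih (n + 1) (by convert h using 1; omega)
    rw [G.exact j] at h0
    have := F.tensorExact_ker (G.d (j + 1)).rangeRestrict (G.d (j + 1)).surjective_rangeRestrict h0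
    rwa [LinearMap.ker_rangeRestrict] at this

/-- There is a `t`-th syzygy `S` of `M` such that `Tor_{n+1}(S, N) = 0` whenever
`Tor_{n+t+1}(M, N) = 0`. -/
lemma exists_syzygy (G : MinimalFreeResolution R M) (t : ℕ) :
    ∃ (S : Type u) (_ : AddCommGroup S) (_ : Module R S),
    IsNthSyzygy R t M S ∧ ∀ n, F.TensorExact M (n + t) → F.TensorExact S n := by
  match t with
  | 0 => exact ⟨M, _, _, ⟨G, ⟨LinearEquiv.refl R M⟩⟩, fun n h => h⟩
  | 1 => exact ⟨LinearMap.ker G.aug, _, _, ⟨G, ⟨LinearEquiv.refl R _⟩⟩, fun n h =>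
      F.tensorExact_ker G.aug G.aug_surjective h⟩
  | j + 2 => exact ⟨LinearMap.ker (G.d j), _, _, ⟨G, ⟨LinearEquiv.refl R _⟩⟩, fun n h =>
      F.tensorExact_ker_d G j n h⟩

/-- Dimension shift along `0 → 𝔪 → R → R/𝔪 → 0`. -/
lemma tensorExact_residue {n : ℕ} (h : F.TensorExact (maximalIdeal R) n) :
    F.TensorExact (R ⧸ maximalIdeal R) (n + 1) := by
  apply F.tensorExact_of_ker (maximalIdeal R).mkQ (Submodule.mkQ_surjective _)
  rwa [Submodule.ker_mkQ]

/-- By minimality the differentials of `R/𝔪 ⊗ F` vanish. -/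
lemma lTensor_d_residue (i : ℕ) : (F.d i).lTensor (R ⧸ maximalIdeal R) = 0 := by
  have key : ∀ y ∈ maximalIdeal R • (⊤ : Submodule R (Fin (F.rank i) → R)),
      ∀ x : R ⧸ maximalIdeal R, x ⊗ₜ[R] y = 0 := by
    intro y hy x
    induction hy using Submodule.smul_induction_on' with
    | smul r hr v _ =>
      have : r • x = 0 := by
        obtain ⟨x, rfl⟩ := Submodule.mkQ_surjective _ x
        rw [← map_smul]
        exact (Submodule.Quotient.mk_eq_zero _).2 (Ideal.mul_mem_right _ _ hr)
      rw [← TensorProduct.smul_tmul, this, TensorProduct.zero_tmul]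
    | add y _ z _ hy hz => rw [TensorProduct.tmul_add, hy, hz, add_zero]
  exact TensorProduct.ext' fun x y => key _ (F.minimal i ⟨y, rfl⟩) x

/-- `Tor_{n+1}(R/𝔪, N)` is `(R/𝔪)^{rank (n+1)}`. -/
lemma rank_eq_zero_of_tensorExact {n : ℕ} (h : F.TensorExact (R ⧸ maximalIdeal R) n) :
    F.rank (n + 1) = 0 := by
  by_contra hne
  let j : Fin (F.rank (n + 1)) := ⟨0, Nat.pos_of_ne_zero hne⟩
  let z : (R ⧸ maximalIdeal R) ⊗[R] (Fin (F.rank (n + 1)) → R) :=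
    (Submodule.mkQ _ 1) ⊗ₜ Pi.single j 1
  obtain ⟨c, hc⟩ := (h z).1 (by rw [lTensor_d_residue]; rfl)
  rw [lTensor_d_residue, LinearMap.zero_apply] at hc
  have h1 := congrArg (TensorProduct.rid R _ ∘ (LinearMap.proj j).lTensor _) hc
  simp only [Function.comp_apply, map_zero, z, LinearMap.lTensor_tmul, LinearMap.proj_apply,
    Pi.single_eq_same, TensorProduct.rid_tmul, one_smul] at h1
  exact (Ideal.ne_top_iff_one _).1 (maximalIdeal.isMaximal R).ne_top
    ((Submodule.Quotient.mk_eq_zero _).1 h1.symm)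

/-- If `F_n = 0`, then `F_{n+2} → F_{n+1}` is surjective with image in `𝔪 F_{n+1}`, so `F_{n+1} = 0`
by Nakayama's lemma. -/
lemma rank_succ_eq_zero {n : ℕ} (h : F.rank n = 0) : F.rank (n + 1) = 0 := by
  have h1 : LinearMap.range (F.d (n + 1)) = ⊤ := by
    rw [← F.exact n, LinearMap.ker_eq_top]
    have : IsEmpty (Fin (F.rank n)) := by rw [h]; infer_instance
    exact Subsingleton.elim _ _
  have h2 := F.minimal (n + 1)
  rw [h1] at h2
  have h3 := Submodule.eq_bot_of_le_smul_of_le_jacobson_bot _ _ Module.Finite.fg_top h2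
    (IsLocalRing.maximalIdeal_le_jacobson _)
  by_contra hne
  have : Nonempty (Fin (F.rank (n + 1))) := ⟨⟨0, Nat.pos_of_ne_zero hne⟩⟩
  exact bot_ne_top h3.symm

lemma rank_eq_zero_of_le {m n : ℕ} (hmn : m ≤ n) (h : F.rank m = 0) : F.rank n = 0 :=
  Nat.le_induction h (fun _ _ => F.rank_succ_eq_zero) n hmn

end Syzygy

/-! ### Existence of minimal free resolutions -/

section Existence
variable {R : Type u} [CommRing R] [IsLocalRing R]

/-- A free cover whose kernel lies in `𝔪 R^n`, obtained by lifting a basis of `R/𝔪 ⊗ M`. -/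
lemma exists_minimal_cover (M : Type u) [AddCommGroup M] [Module R M] [Module.Finite R M] :
    ∃ (n : ℕ) (f : (Fin n → R) →ₗ[R] M), Function.Surjective f ∧
      LinearMap.ker f ≤ maximalIdeal R • (⊤ : Submodule R (Fin n → R)) := by
  let b := Module.finBasis (ResidueField R) (ResidueField R ⊗[R] M)
  have hs : Function.Surjective (TensorProduct.mk R (ResidueField R) M 1) :=
    TensorProduct.mk_surjective R M _ Ideal.Quotient.mk_surjective
  choose v hv using fun i => hs (b i)
  refine ⟨_, Fintype.linearCombination R v, ?_, ?_⟩
  · rw [← LinearMap.range_eq_top, Fintype.range_linearCombination]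
    exact IsLocalRing.span_eq_top_of_tmul_eq_basis v b hv
  · intro a ha
    have h1 : ∑ i, residue R (a i) • b i = 0 := by
      have h0 := congrArg (TensorProduct.mk R (ResidueField R) M 1) (LinearMap.mem_ker.1 ha)
      rw [Fintype.linearCombination_apply, map_sum, map_zero] at h0
      rw [← h0]
      refine Finset.sum_congr rfl fun i _ => ?_
      rw [map_smul, hv]
      exact algebraMap_smul (ResidueField R) (a i) (b i)
    have h2 := Fintype.linearIndependent_iff.1 b.linearIndependent _ h1
    rw [pi_eq_sum_univ' a]
    refine Submodule.sum_mem _ fun i _ => Submodule.smul_mem_smul ?_ trivial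
    exact (residue_eq_zero_iff _).1 (h2 i)

variable [IsNoetherianRing R]

lemma exists_minimal_cover_submodule {n : ℕ} (K : Submodule R (Fin n → R)) :
    ∃ (m : ℕ) (f : (Fin m → R) →ₗ[R] (Fin n → R)), LinearMap.range f = K ∧
      LinearMap.ker f ≤ maximalIdeal R • (⊤ : Submodule R (Fin m → R)) := by
  obtain ⟨m, f, hf, hk⟩ := exists_minimal_cover (R := R) K
  refine ⟨m, K.subtype ∘ₗ f, ?_, ?_⟩
  · rw [LinearMap.range_comp, LinearMap.range_eq_top.2 hf, Submodule.map_top,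
      Submodule.range_subtype]
  · rwa [LinearMap.ker_comp_of_ker_eq_bot _ K.ker_subtype]

theorem exists_of_finite (M : Type u) [AddCommGroup M] [Module R M] [Module.Finite R M] :
    Nonempty (MinimalFreeResolution R M) := by
  obtain ⟨n₀, ε, hε, hk⟩ := exists_minimal_cover (R := R) M
  choose m f hf hfk using fun s : Σ n : ℕ, Submodule R (Fin n → R) =>
    exists_minimal_cover_submodule s.2
  -- The state at step `i` is the `i`-th free module together with the syzygy inside it.
  let s : ℕ → Σ n : ℕ, Submodule R (Fin n → R) := fun i =>
    Nat.rec ⟨n₀, LinearMap.ker ε⟩ (fun _ s => ⟨m s, LinearMap.ker (f s)⟩) i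
  refine ⟨{
    rank := fun i => (s i).1
    aug := ε
    d := fun i => f (s i)
    aug_surjective := hε
    exact_aug := (hf (s 0)).symm
    exact := fun i => (hf (s (i + 1))).symm
    minimal := fun i => ?_ }⟩
  rw [hf]
  cases i with
  | zero => exact hk
  | succ i => exact hfk (s i)

end Existence

end MinimalFreeResolution

/-- **Lemma 7.1(2a).** If `𝔪` is a direct summand of `Ω^t M ⊕ Ω^{t+1} M` and
`Tor_ℓ^R(M, N) = 0 = Tor_{ℓ+1}^R(M, N)` for some `ℓ ≥ t + 1`, then `pd_R N < ∞`. -/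
theorem finite_projDim_of_two_tor_vanishings
    (R : Type u) [CommRing R] [IsNoetherianRing R] [IsLocalRing R]
    (M N : Type u) [AddCommGroup M] [Module R M] [Module.Finite R M]
    [AddCommGroup N] [Module R N] [Module.Finite R N]
    (t : ℕ)
    (hsum : ∀ (S S' : Type u) [AddCommGroup S] [Module R S] [AddCommGroup S'] [Module R S'],
      IsNthSyzygy R t M S → IsNthSyzygy R (t + 1) M S' →
      IsDirectSummand R (↥(maximalIdeal R)) (S × S'))
    (ℓ : ℕ) (hl : t + 1 ≤ ℓ)
    (htor₁ : Subsingleton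
      (((Tor (ModuleCat.{u} R) ℓ).obj (ModuleCat.of R M)).obj (ModuleCat.of R N)))
    (htor₂ : Subsingleton
      (((Tor (ModuleCat.{u} R) (ℓ + 1)).obj (ModuleCat.of R M)).obj (ModuleCat.of R N))) :
    ∃ n : ℕ, ProjDimLE R N n := by
  obtain ⟨G⟩ := MinimalFreeResolution.exists_of_finite (R := R) M
  obtain ⟨F⟩ := MinimalFreeResolution.exists_of_finite (R := R) N
  obtain ⟨s, rfl⟩ := Nat.exists_eq_add_of_le hl
  have h₁ : F.TensorExact M (s + t) := F.tensorExact_of_tor M (s + t) (by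
    rwa [show t + 1 + s = s + t + 1 by omega] at htor₁)
  have h₂ : F.TensorExact M (s + (t + 1)) := F.tensorExact_of_tor M (s + (t + 1)) (by
    rwa [show t + 1 + s + 1 = s + (t + 1) + 1 by omega] at htor₂)
  obtain ⟨S, _, _, hS, hSS⟩ := F.exists_syzygy G t
  obtain ⟨T, _, _, hT, hTT⟩ := F.exists_syzygy G (t + 1)
  have h𝔪 : F.TensorExact (maximalIdeal R) s :=
    F.tensorExact_of_retract (hsum S T hS hT) (F.tensorExact_prod (hSS s h₁) (hTT s h₂))
  have h0 : F.rank (s + 2) = 0 := F.rank_eq_zero_of_tensorExact (F.tensorExact_residue h𝔪)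
  exact ⟨s + 2, F, fun i hi => F.rank_eq_zero_of_le hi.le h0⟩
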